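/- Let c ∈ ℤ[i] be square-free with c ≡ 1 (mod 16), c ≠ 1, and write c = π₁⋯π_k as a product of distinct primary primes π_i ≡ 1 (mod (1+i)³). Then the quadratic Gauss sum satisfies g(c) = ∏_{i=1}^{k} g(π_i). -/

import Mathlib

/-!
The map `(x_i) ↦ ∑ x_i C_i` with `C_i = ∏_{j ≠ i} π_j` is a bijection from the product of the residue
systems modulo `π_i` onto the residues modulo `c` (`crtMap_bijective`). Under it
`ẽ(x/c) = ∏ ẽ(x_i/π_i)`, because `ẽ` is additive and trivial on `ℤ[i]`, and
`(x/c) = ∏ (x/π_i) = ∏ (x_i/π_i) · ∏ (C_i/π_i)`. Hence `g(c) = ∏ g(π_i) · ∏_{i ≠ j} (π_j/π_i)`, and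
the last product is `1` because its factors `(π_j/π_i) = (π_i/π_j) = ±1` cancel in pairs
(`prod_cofactor_symbol`). Square-freeness makes the `π_i` pairwise non-associate.

What is needed of the symbol is therefore multiplicativity, periodicity and quadratic reciprocity
in `ℤ[i]` (`quadratic_reciprocity`). All of them come from Euler's criterion (`sq_symbol_eq`)
together with Dirichlet's reduction to rational Jacobi symbols:
* if `π = a + bi` has prime norm `p`, then `((x + yi)/π) = ((ax + by)/p)` (`symbol_split`);
* if `π = ±q` with `q ≡ 3 (mod 4)` prime, then `(α/π) = (N(α)/q)` (`symbol_inert`).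

Reciprocity then follows from Jacobi reciprocity over `ℤ` and the identity
`(a² + b²)(c² + d²) = (ac + bd)² + (ad - bc)²`. It holds for all primes with odd real and even
imaginary part, in particular for primary ones.
-/

open Complex GaussianInt MeasureTheory Asymptotics Filter
open scoped ComplexConjugate

noncomputable section

/-- The element `i` of `ℤ[i]`. -/
def gi : GaussianInt := ⟨0, 1⟩

/-- The norm `N(a+bi) = a² + b²` of a Gaussian integer, as a natural number. -/
def gnorm (a : GaussianInt) : ℕ := a.norm.natAbs

/-- An element of `ℤ[i]` is primary if it is `≡ 1 (mod (1+i)³)`. -/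
def IsPrimary (a : GaussianInt) : Prop := (1 + gi) ^ 3 ∣ a - 1

/-- `c ≡ 1 (mod 16)` in `ℤ[i]`. -/
def ModOne16 (c : GaussianInt) : Prop := (16 : GaussianInt) ∣ c - 1

open scoped Classical in
/-- The quartic residue symbol `(a/π)₄` for a prime `π` of odd norm:
the unique unit `u ∈ {±1, ±i}` with `a^((N(π)-1)/4) ≡ u (mod π)` if it exists
(i.e. when `π ∤ a`), and `0` otherwise. -/
def quarticSymbolPrime (a π : GaussianInt) : GaussianInt :=
  if h : ∃ u : GaussianInt, IsUnit u ∧ π ∣ a ^ ((gnorm π - 1) / 4) - u then h.choose else 0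

/-- The quartic residue symbol `(a/n)₄`, extended multiplicatively in the lower entry
(via a prime factorization of `n`; each prime factor's symbol only depends on its
associate class, so this is well defined). -/
def quarticSymbol (a n : GaussianInt) : GaussianInt :=
  ((UniqueFactorizationMonoid.factors n).map fun π => quarticSymbolPrime a π).prod

/-- The quadratic residue symbol `(a/n) = ((a/n)₄)²`. -/
def quadSymbol (a n : GaussianInt) : GaussianInt := quarticSymbol a n ^ 2

/-- A generator of an ideal of the principal ideal domain `ℤ[i]`. -/
def idealGen (A : Ideal GaussianInt) : GaussianInt := Submodule.IsPrincipal.generator A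

/-- The absolute norm of an ideal of `ℤ[i]`. -/
def idealNorm (A : Ideal GaussianInt) : ℕ := gnorm (idealGen A)

/-- The quadratic Hecke character `χ_c`, as a function of nonzero integral ideals:
`χ_c(A) = (α/c)` for a generator `α` of `A` (for square-free `c ≡ 1 (mod 16)` this is
independent of the generator, since `χ_c` is trivial on units). -/
def heckeChar (c : GaussianInt) (A : Ideal GaussianInt) : ℂ :=
  toComplex (quadSymbol (idealGen A) c)

/-- Predicate expressing that `L : ℂ → ℂ` is the analytic continuation of the
Hecke `L`-function `L(s, χ_c)`: it is given by the Dirichlet series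
`Σ_{0 ≠ A} χ_c(A) N(A)^{-s}` for `Re(s) > 1` and is differentiable away from `s = 1`
(at `s = 1` the principal character gives the Dedekind zeta function, which has a pole). -/
def IsHeckeL (c : GaussianInt) (L : ℂ → ℂ) : Prop :=
  (∀ s : ℂ, 1 < s.re → HasSum
      (fun A : {A : Ideal GaussianInt // A ≠ ⊥} =>
        heckeChar c A.1 * (idealNorm A.1 : ℂ) ^ (-s)) (L s)) ∧
  ∀ s : ℂ, s ≠ 1 → DifferentiableAt ℂ L s

/-- The constant `A = ∏_{π prime, (π,2)=1} (1 - 1/((N(π)+1)N(π)))`, the product running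
over the odd primes of `ℤ[i]` (equivalently, over odd nonzero prime ideals). -/
def eulerConstA : ℝ :=
  ∏' P : {P : Ideal GaussianInt // P.IsPrime ∧ P ≠ ⊥ ∧ (2 : GaussianInt) ∉ P},
    (1 - ((idealNorm P.1 + 1) * (idealNorm P.1) : ℝ)⁻¹)

/-- The value `ζ_{ℚ(i)}(2)` of the Dedekind zeta function of `ℚ(i)` at `2`. -/
def zetaQi2 : ℝ := ∑' A : {A : Ideal GaussianInt // A ≠ ⊥}, ((idealNorm A.1 : ℝ) ^ 2)⁻¹

/-- The additive character `ẽ(z) = exp(2πi(z/(2i) - z̄/(2i)))`. -/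
def eTilde (z : ℂ) : ℂ :=
  Complex.exp (2 * Real.pi * I * (z / (2 * I) - (conj z) / (2 * I)))

/-- The quadratic Gauss sum `g(n) = Σ_{x mod n} (x/n) ẽ(x/n)` (the sum over the finite
quotient `ℤ[i]/(n)`; each term is independent of the representative chosen). -/
def quadGaussSum (n : GaussianInt) : ℂ :=
  ∑' x : GaussianInt ⧸ Ideal.span {n},
    toComplex (quadSymbol (Quotient.out x) n) * eTilde (toComplex (Quotient.out x) / toComplex n)

/-- The weight `V(ξ) = (1/2πi)∫_{(2)} (Γ(s+1/2)/Γ(1/2)) ξ^{-s} ds/s`, the contour integral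
along the vertical line `Re(s) = 2` (parametrized by `s = 2 + iτ`). -/
def Vweight (ξ : ℝ) : ℂ :=
  (2 * Real.pi)⁻¹ * ∫ τ : ℝ,
    Complex.Gamma ((2 + τ * I) + 1 / 2) / Complex.Gamma (1 / 2) *
      (ξ : ℂ) ^ (-(2 + τ * I)) / (2 + τ * I)


/-! ### Primes of odd norm and the residue symbol at a prime -/

lemma gi_sq : gi ^ 2 = -1 := by decide

lemma norm_eq (z : GaussianInt) : z.norm = z.re ^ 2 + z.im ^ 2 := by
  rw [Zsqrtd.norm_def]; ring

lemma eq_add_gi (z : GaussianInt) : z = (z.re : GaussianInt) + z.im * gi := by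
  apply Zsqrtd.ext <;> simp [gi]

lemma IsPrimary.parity {z : GaussianInt} (h : IsPrimary z) : z.re % 2 = 1 ∧ z.im % 2 = 0 := by
  obtain ⟨w, hw⟩ := h
  have h3 : (1 + gi) ^ 3 = ⟨-2, 2⟩ := by decide
  rw [h3, sub_eq_iff_eq_add] at hw
  have h1 := congrArg Zsqrtd.re hw
  have h2 := congrArg Zsqrtd.im hw
  simp at h1 h2
  omega

lemma exists_nat_prime_dvd {π : GaussianInt} (hp : Prime π) :
    ∃ p : ℕ, p.Prime ∧ π ∣ (p : GaussianInt) := by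
  have key : ∀ n : ℕ, n ≠ 0 → π ∣ (n : GaussianInt) →
      ∃ p : ℕ, p.Prime ∧ π ∣ (p : GaussianInt) := by
    intro n
    induction n using induction_on_primes with
    | zero => simp
    | one => intro _ h; exact absurd (isUnit_of_dvd_one (by simpa using h)) hp.not_isUnit
    | prime_mul p a pp ih =>
      intro h0 h
      rw [Nat.cast_mul] at h
      rcases hp.dvd_or_dvd h with h | h
      · exact ⟨p, pp, h⟩
      · exact ih (by rintro rfl; simp at h0) h
  refine key π.norm.natAbs ?_ ?_
  · simpa using hp.ne_zero
  · rw [GaussianInt.natCast_natAbs_norm, Zsqrtd.norm_eq_mul_conj]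
    exact dvd_mul_right _ _

/-- A prime of odd real and even imaginary part either has rational prime norm `p ≡ 1 (mod 4)`
(the split case) or is `±q` for a rational prime `q ≡ 3 (mod 4)` (the inert case). -/
lemma prime_cases {π : GaussianInt} (hp : Prime π) (hre : π.re % 2 = 1) (him : π.im % 2 = 0) :
    (∃ p : ℕ, p.Prime ∧ p % 4 = 1 ∧ π.norm = p) ∨
    (∃ q : ℕ, q.Prime ∧ q % 4 = 3 ∧ π.im = 0 ∧ (π.re = q ∨ π.re = -q)) := by
  have hN4 : π.norm % 4 = 1 := by
    rw [norm_eq]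
    obtain ⟨a, ha⟩ : ∃ a, π.re = 2 * a + 1 := ⟨π.re / 2, by omega⟩
    obtain ⟨b, hb⟩ : ∃ b, π.im = 2 * b := ⟨π.im / 2, by omega⟩
    rw [ha, hb]
    ring_nf
    omega
  obtain ⟨p, pp, β, hβ⟩ := exists_nat_prime_dvd hp
  have hnorm : p ^ 2 = π.norm.natAbs * β.norm.natAbs := by
    have := congrArg (fun z => (Zsqrtd.norm z).natAbs) hβ
    simpa [Zsqrtd.norm_mul, Int.natAbs_mul, sq] using this
  have hdvd : π.norm.natAbs ∣ p ^ 2 := ⟨_, hnorm⟩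
  have hnn := GaussianInt.norm_nonneg π
  have hne1 : π.norm.natAbs ≠ 1 := by
    intro h
    exact hp.not_isUnit (Zsqrtd.norm_eq_one_iff.mp h)
  obtain ⟨j, hj, hpj⟩ := (Nat.dvd_prime_pow pp).mp hdvd
  interval_cases j
  · simp at hpj; exact absurd hpj (by simpa using hne1)
  · left
    rw [pow_one] at hpj
    refine ⟨p, pp, ?_, ?_⟩ <;> omega
  · right
    have hβ1 : β.norm.natAbs = 1 := by
      have : 0 < p ^ 2 := pow_pos pp.pos 2
      rw [hpj] at hnorm
      exact (Nat.eq_of_mul_eq_mul_left this (by omega : p ^ 2 * 1 = p ^ 2 * β.norm.natAbs)).symm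
    have hβu : IsUnit β := Zsqrtd.norm_eq_one_iff.mp hβ1
    have hpp : Prime (p : GaussianInt) := by
      rw [hβ]; exact (associated_mul_unit_right π β hβu).prime hp
    have := Fact.mk pp
    have h3 := GaussianInt.mod_four_eq_three_of_nat_prime_of_prime p hpp
    obtain ⟨u, rfl⟩ := hβu
    have hπ : π = p * ((u⁻¹ : GaussianIntˣ) : GaussianInt) := by rw [hβ]; simp
    have hv : IsUnit ((u⁻¹ : GaussianIntˣ) : GaussianInt) := Units.isUnit _
    set v := ((u⁻¹ : GaussianIntˣ) : GaussianInt)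
    have hv1 : v.norm = 1 := by
      have h1 := Zsqrtd.norm_eq_one_iff.mpr hv
      have := GaussianInt.norm_nonneg v
      omega
    rw [norm_eq] at hv1
    have h1 : π.re = p * v.re := by rw [hπ]; simp
    have h2 : π.im = p * v.im := by rw [hπ]; simp
    have hvim : v.im = 0 := by
      have hb : v.im % 2 = 0 := by
        rw [h2, Int.mul_emod] at him
        have : (p : ℤ) % 2 = 1 := by omega
        rw [this] at him; omega
      by_contra hne
      have : 1 < v.im ^ 2 := by
        rcases lt_or_gt_of_ne hne with h | h
        · have : v.im ≤ -2 := by omega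
          nlinarith
        · have : 2 ≤ v.im := by omega
          nlinarith
      nlinarith [sq_nonneg v.re]
    rw [hvim] at hv1 h2
    have hvre : v.re = 1 ∨ v.re = -1 := sq_eq_one_iff.mp (by simpa using hv1)
    refine ⟨p, pp, h3, by simpa using h2, ?_⟩
    rcases hvre with h | h <;> rw [h] at h1 <;> simp [h1]

/-- Euler's criterion determines the square of the quartic symbol: when `N(π) = 4m + 1`, it is the
only `s ∈ {0, ±1}` with `α ^ (2m) ≡ s (mod π)`. A square root of `s` among the units is found by
factoring `α ^ (2m) ∓ 1`, so Fermat's little theorem in `ℤ[i]/(π)` is not needed. -/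
lemma sq_symbol_eq {α π : GaussianInt} (hp : Prime π) (h2 : ¬ π ∣ 2) {m : ℕ} (hm : 0 < m)
    (hN : gnorm π = 4 * m + 1) {s : ℤ} (hs : s = 0 ∨ s = 1 ∨ s = -1)
    (h : π ∣ α ^ (2 * m) - s) : quarticSymbolPrime α π ^ 2 = s := by
  have hexp : (gnorm π - 1) / 4 = m := by omega
  have hsq : α ^ (2 * m) = (α ^ m) ^ 2 := by rw [← pow_mul, mul_comm]
  rw [hsq] at h
  unfold quarticSymbolPrime
  rw [hexp]
  have hunit : ∀ u : GaussianInt, IsUnit u → u ^ 2 = 1 ∨ u ^ 2 = -1 := by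
    intro u hu
    have h1 : u.norm = 1 := by
      have h1 := Zsqrtd.norm_eq_one_iff.mpr hu
      have := GaussianInt.norm_nonneg u
      omega
    rw [norm_eq] at h1
    have ha : u.re ≤ 1 := by nlinarith [sq_nonneg u.im]
    have ha' : -1 ≤ u.re := by nlinarith [sq_nonneg u.im]
    have hb : u.im ≤ 1 := by nlinarith [sq_nonneg u.re]
    have hb' : -1 ≤ u.im := by nlinarith [sq_nonneg u.re]
    obtain ⟨a, b⟩ := u
    simp only at h1 ha ha' hb hb'
    interval_cases a <;> interval_cases b <;> first | (exfalso; revert h1; decide) | decide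
  by_cases hdvd : π ∣ α
  · have hpow : π ∣ α ^ m := dvd_pow hdvd hm.ne'
    have hs0 : s = 0 := by
      have h3 : π ∣ (s : GaussianInt) := by
        have := dvd_sub (dvd_pow hpow two_ne_zero) h
        simpa using this
      rcases hs with h | h | h
      · exact h
      · subst h; exact absurd (isUnit_of_dvd_one (by simpa using h3)) hp.not_isUnit
      · subst h; exact absurd (isUnit_of_dvd_one (by simpa using h3)) hp.not_isUnit
    rw [dif_neg, hs0]
    · simp
    · rintro ⟨u, hu, hd⟩
      exact hp.not_isUnit (isUnit_of_dvd_unit ((dvd_sub_right hpow).mp hd) hu)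
  · have hex : ∃ u : GaussianInt, IsUnit u ∧ π ∣ α ^ m - u := by
      rcases hs with h0 | h0 | h0 <;> subst h0
      · simp only [Int.cast_zero, sub_zero] at h
        exact absurd (hp.dvd_of_dvd_pow (hp.dvd_of_dvd_pow h)) hdvd
      · have : π ∣ (α ^ m - 1) * (α ^ m - (-1)) := by
          convert h using 1; push_cast; ring
        rcases hp.dvd_or_dvd this with h | h
        · exact ⟨1, isUnit_one, h⟩
        · exact ⟨-1, isUnit_one.neg, h⟩
      · have : π ∣ (α ^ m - gi) * (α ^ m - (-gi)) := by
          convert h using 1; push_cast; linear_combination -gi_sq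
        have hgi : IsUnit gi := IsUnit.of_mul_eq_one (-gi) (by decide)
        rcases hp.dvd_or_dvd this with h | h
        · exact ⟨gi, hgi, h⟩
        · exact ⟨-gi, hgi.neg, h⟩
    rw [dif_pos hex]
    obtain ⟨hu, hd⟩ := hex.choose_spec
    set u := hex.choose
    have hus : π ∣ u ^ 2 - s := by
      have h3 : π ∣ (α ^ m) ^ 2 - u ^ 2 := hd.trans (sub_dvd_pow_sub_pow _ _ 2)
      have := dvd_sub h h3
      convert this using 1; ring
    have h1 : ¬ π ∣ 1 := fun h => hp.not_isUnit (isUnit_of_dvd_one h)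
    rcases hunit u hu with h3 | h3 <;> rw [h3] at hus ⊢ <;>
      rcases hs with h0 | h0 | h0 <;> subst h0 <;> norm_num at hus ⊢ <;>
      first
        | exact (h1 hus).elim
        | exact (h2 (by simpa using hus)).elim

lemma int_euler {p : ℕ} (pp : p.Prime) (n : ℤ) :
    (p : GaussianInt) ∣ (n : GaussianInt) ^ (p / 2) - (jacobiSym n p : ℤ) := by
  have := Fact.mk pp
  have h := legendreSym.eq_pow p n
  rw [jacobiSym.legendreSym.to_jacobiSym] at h
  have h2 : (p : ℤ) ∣ n ^ (p / 2) - jacobiSym n p := by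
    rw [← ZMod.intCast_zmod_eq_zero_iff_dvd]
    push_cast
    rw [h]; simp
  simpa using map_dvd (Int.castRingHom GaussianInt) h2

lemma not_dvd_two {π : GaussianInt} (hp : Prime π) (hre : π.re % 2 = 1) (him : π.im % 2 = 0) :
    ¬ π ∣ 2 := by
  intro h
  have h4 : π.norm ∣ 4 := by
    obtain ⟨β, hβ⟩ := h
    have := congrArg Zsqrtd.norm hβ
    rw [Zsqrtd.norm_mul] at this
    exact ⟨_, by rw [← this]; decide⟩
  have hle := Int.le_of_dvd (by norm_num) h4
  have h0 := GaussianInt.norm_nonneg π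
  have h1 : π.norm ≠ 1 := fun h => hp.not_isUnit (Zsqrtd.norm_eq_one_iff.mp (by rw [h]; rfl))
  have hodd : π.norm % 2 = 1 := by
    rw [norm_eq]
    obtain ⟨a, ha⟩ : ∃ a, π.re = 2 * a + 1 := ⟨π.re / 2, by omega⟩
    obtain ⟨b, hb⟩ : ∃ b, π.im = 2 * b := ⟨π.im / 2, by omega⟩
    rw [ha, hb]
    ring_nf
    omega
  interval_cases hh : π.norm <;> omega

/-- An odd prime in the normalization shared by all primary primes: odd real part, even imaginary
part. -/
def OddPrime (π : GaussianInt) : Prop := Prime π ∧ π.re % 2 = 1 ∧ π.im % 2 = 0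

lemma jacobi_cases (n : ℤ) (p : ℕ) :
    jacobiSym n p = 0 ∨ jacobiSym n p = 1 ∨ jacobiSym n p = -1 := jacobiSym.trichotomy n p

lemma norm_parts (z : GaussianInt) : (z.norm : GaussianInt) =
    (z.re : GaussianInt) ^ 2 + (z.im : GaussianInt) ^ 2 := by
  rw [norm_eq]; push_cast; rfl

/-- For `a` odd with `p = a² + b²` prime and `p ≡ 1 (mod 4)`, reciprocity gives
`(a/p) = (p/a) = (b²/a) = 1`. -/
lemma jacobi_re {p : ℕ} (pp : p.Prime) (hp4 : p % 4 = 1) {a b : ℤ} (ha : a % 2 = 1)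
    (h : a ^ 2 + b ^ 2 = p) : jacobiSym a p = 1 := by
  have hodd : Odd a.natAbs := by rw [Nat.odd_iff]; omega
  have hpodd : Odd p := by rw [Nat.odd_iff]; omega
  have habs : jacobiSym a p = jacobiSym (a.natAbs : ℤ) p := by
    rcases Int.natAbs_eq a with h | h
    · rw [← h]
    · conv_lhs => rw [h]
      rw [jacobiSym.neg _ hpodd, ZMod.χ₄_nat_one_mod_four hp4, one_mul]
  rw [habs, jacobiSym.quadratic_reciprocity_one_mod_four' hodd hp4]
  have hmod : jacobiSym (p : ℤ) a.natAbs = jacobiSym (b ^ 2) a.natAbs := by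
    apply jacobiSym.mod_left'
    apply Int.ModEq.symm
    rw [Int.modEq_iff_dvd]
    exact ⟨a.natAbs, by rw [← h]; linear_combination -Int.natAbs_mul_self' a⟩
  rw [hmod]
  apply jacobiSym.sq_one'
  by_contra hg
  obtain ⟨r, hr, hrd⟩ := Nat.exists_prime_and_dvd hg
  have h1 : (r : ℤ) ∣ b := (Int.natCast_dvd_natCast.mpr hrd).trans (Int.gcd_dvd_left ..)
  have h2 : (r : ℤ) ∣ a := by
    have := (Int.natCast_dvd_natCast.mpr hrd).trans (Int.gcd_dvd_right b a.natAbs)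
    exact Int.dvd_natAbs.mp this
  obtain ⟨x, rfl⟩ := h1
  obtain ⟨y, rfl⟩ := h2
  have h3 : r * r ∣ p := by
    rw [← Int.natCast_dvd_natCast]
    exact ⟨y ^ 2 + x ^ 2, by rw [← h]; push_cast; ring⟩
  have := (Nat.prime_iff.mp pp).irreducible.squarefree r h3
  exact hr.one_lt.ne' (Nat.isUnit_iff.mp this)

/-- At a split prime `π = a + bi` of norm `p`, `aα ≡ ax + by (mod π)` for `α = x + yi`, and `a` is
a square modulo `p`, so the quadratic symbol of `α` is the Legendre symbol of `ax + by`. -/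
lemma split_euler {π : GaussianInt} {p : ℕ} (pp : p.Prime) (hp4 : p % 4 = 1)
    (hre : π.re % 2 = 1) (hN : π.norm = p) (α : GaussianInt) :
    π ∣ α ^ (p / 2) - (jacobiSym (π.re * α.re + π.im * α.im) p : ℤ) := by
  have hπp : π ∣ (p : GaussianInt) := by
    have : ((p : ℤ) : GaussianInt) = π * star π := by rw [← hN, Zsqrtd.norm_eq_mul_conj]
    exact ⟨star π, by simpa using this⟩
  set n := π.re * α.re + π.im * α.im with hn
  have h1 : π ∣ (π.re * α) ^ (p / 2) - (n : GaussianInt) ^ (p / 2) := by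
    refine dvd_trans ⟨α.im * gi, ?_⟩ (sub_dvd_pow_sub_pow _ _ _)
    apply Zsqrtd.ext <;> simp [hn, gi]
  have h2 := hπp.trans (int_euler pp n)
  have h3 := hπp.trans (int_euler pp π.re)
  rw [jacobi_re (b := π.im) pp hp4 hre (by rw [← hN, norm_eq])] at h3
  have h4 := dvd_sub (dvd_add h1 h2) (h3.mul_left (α ^ (p / 2)))
  convert h4 using 1
  rw [mul_pow]; push_cast; ring

/-- At an inert prime `q`, Frobenius is complex conjugation, so `α ^ (q + 1) ≡ N(α) (mod q)` and
the quadratic symbol of `α` is the Legendre symbol of `N(α)`. -/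
lemma inert_euler {q t : ℕ} (pq : q.Prime) (hq : q = 4 * t + 3) (α : GaussianInt) :
    (q : GaussianInt) ∣ α ^ (2 * (4 * t ^ 2 + 6 * t + 2)) - (jacobiSym α.norm q : ℤ) := by
  have hq2 : q / 2 = 2 * t + 1 := by omega
  have hflt : ∀ n : ℤ, (q : GaussianInt) ∣ (n : GaussianInt) ^ q - n := by
    intro n
    have := Fact.mk pq
    have h2 : (q : ℤ) ∣ n ^ q - n := by
      rw [← ZMod.intCast_zmod_eq_zero_iff_dvd]
      push_cast
      rw [ZMod.pow_card]; simp
    simpa using map_dvd (Int.castRingHom GaussianInt) h2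
  have hfrob : (q : GaussianInt) ∣ α ^ q - star α := by
    obtain ⟨r, hr⟩ := exists_add_pow_prime_eq pq (α.re : GaussianInt) (α.im * gi)
    rw [← eq_add_gi] at hr
    have hgi : gi ^ q = -gi := by
      rw [hq, show gi ^ (4 * t + 3) = (gi ^ 2) ^ (2 * t) * (gi ^ 2 * gi) by ring, gi_sq]
      simp
    have hstar : star α = (α.re : GaussianInt) - α.im * gi := by
      apply Zsqrtd.ext <;> simp [gi]
    rw [hr, hstar, mul_pow, hgi]
    have h3 := dvd_add (dvd_sub (hflt α.re) ((hflt α.im).mul_right gi))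
      (dvd_mul_right (q : GaussianInt) (α.re * (α.im * gi) * r))
    convert h3 using 1; ring
  have hnorm : (q : GaussianInt) ∣ α ^ (q + 1) - (α.norm : ℤ) := by
    rw [Zsqrtd.norm_eq_mul_conj]
    convert hfrob.mul_left α using 1; ring
  have h1 := hnorm.trans (sub_dvd_pow_sub_pow _ _ (2 * t + 1))
  have h2 := int_euler pq α.norm
  rw [hq2] at h2
  have h3 := dvd_add h1 h2
  convert h3 using 1
  rw [← pow_mul, show (q + 1) * (2 * t + 1) = 2 * (4 * t ^ 2 + 6 * t + 2) by rw [hq]; ring]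
  ring

lemma inert_data {π : GaussianInt} {q t : ℕ} (ht : q = 4 * t + 3) (h0 : π.im = 0)
    (hq : π.re = q ∨ π.re = -q) :
    gnorm π = 4 * (4 * t ^ 2 + 6 * t + 2) + 1 ∧ π ∣ (q : GaussianInt) := by
  constructor
  · have : π.norm = (q : ℤ) ^ 2 := by
      rw [norm_eq, h0]; rcases hq with h | h <;> rw [h] <;> ring
    unfold gnorm
    rw [this, Int.natAbs_pow, Int.natAbs_natCast, ht]; ring
  · rcases hq with h | h
    · exact ⟨1, by rw [mul_one]; apply Zsqrtd.ext <;> simp [h0, h]⟩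
    · exact ⟨-1, by apply Zsqrtd.ext <;> simp [h0, h]⟩

lemma symbol_split {π : GaussianInt} (hπ : OddPrime π) {p : ℕ} (pp : p.Prime) (hp4 : p % 4 = 1)
    (hN : π.norm = p) (α : GaussianInt) :
    quarticSymbolPrime α π ^ 2 = (jacobiSym (π.re * α.re + π.im * α.im) p : ℤ) := by
  obtain ⟨hp, hre, him⟩ := hπ
  have hp1 := pp.one_lt
  refine sq_symbol_eq hp (not_dvd_two hp hre him) (m := p / 4) (by omega) ?_ (jacobi_cases _ _) ?_
  · unfold gnorm; omega
  · rw [show 2 * (p / 4) = p / 2 by omega]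
    exact split_euler pp hp4 hre hN α

lemma symbol_inert {π : GaussianInt} (hπ : OddPrime π) {q : ℕ} (pq : q.Prime) (hq4 : q % 4 = 3)
    (h0 : π.im = 0) (hq : π.re = q ∨ π.re = -q) (α : GaussianInt) :
    quarticSymbolPrime α π ^ 2 = (jacobiSym α.norm q : ℤ) := by
  obtain ⟨hp, hre, him⟩ := hπ
  obtain ⟨t, ht⟩ : ∃ t, q = 4 * t + 3 := ⟨q / 4, by omega⟩
  obtain ⟨hN, hd⟩ := inert_data ht h0 hq
  exact sq_symbol_eq hp (not_dvd_two hp hre him) (by omega) hN (jacobi_cases _ _)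
    (hd.trans (inert_euler pq ht α))

lemma gnorm_form {π : GaussianInt} (hπ : OddPrime π) : ∃ m, 0 < m ∧ gnorm π = 4 * m + 1 ∧
    ∀ α, ∃ s : ℤ, (s = 0 ∨ s = 1 ∨ s = -1) ∧ π ∣ α ^ (2 * m) - s := by
  obtain ⟨hp, hre, him⟩ := hπ
  rcases prime_cases hp hre him with ⟨p, pp, hp4, hN⟩ | ⟨q, pq, hq4, h0, hq⟩
  · have hp1 := pp.one_lt
    refine ⟨p / 4, by omega, by unfold gnorm; omega,
      fun α => ⟨jacobiSym (π.re * α.re + π.im * α.im) p, jacobi_cases _ _, ?_⟩⟩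
    rw [show 2 * (p / 4) = p / 2 by omega]
    exact split_euler pp hp4 hre hN α
  · obtain ⟨t, ht⟩ : ∃ t, q = 4 * t + 3 := ⟨q / 4, by omega⟩
    obtain ⟨hN, hd⟩ := inert_data ht h0 hq
    exact ⟨_, by omega, hN, fun α => ⟨_, jacobi_cases _ _, hd.trans (inert_euler pq ht α)⟩⟩

lemma symbol_mul {π : GaussianInt} (hπ : OddPrime π) (α β : GaussianInt) :
    quarticSymbolPrime (α * β) π ^ 2 =
      quarticSymbolPrime α π ^ 2 * quarticSymbolPrime β π ^ 2 := by
  obtain ⟨m, hm, hN, H⟩ := gnorm_form hπ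
  have h2 := not_dvd_two hπ.1 hπ.2.1 hπ.2.2
  obtain ⟨s, hs, hsd⟩ := H α
  obtain ⟨t, ht, htd⟩ := H β
  rw [sq_symbol_eq hπ.1 h2 hm hN hs hsd, sq_symbol_eq hπ.1 h2 hm hN ht htd, ← Int.cast_mul]
  refine sq_symbol_eq hπ.1 h2 hm hN ?_ ?_
  · rcases hs with h | h | h <;> rcases ht with h' | h' | h' <;> simp [h, h']
  · have := dvd_add (hsd.mul_right (β ^ (2 * m))) (htd.mul_left (s : GaussianInt))
    convert this using 1
    rw [mul_pow]; push_cast; ring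

lemma symbol_congr {π : GaussianInt} (hπ : OddPrime π) {α β : GaussianInt} (h : π ∣ α - β) :
    quarticSymbolPrime α π ^ 2 = quarticSymbolPrime β π ^ 2 := by
  obtain ⟨m, hm, hN, H⟩ := gnorm_form hπ
  have h2 := not_dvd_two hπ.1 hπ.2.1 hπ.2.2
  obtain ⟨t, ht, htd⟩ := H β
  rw [sq_symbol_eq hπ.1 h2 hm hN ht htd]
  refine sq_symbol_eq hπ.1 h2 hm hN ht ?_
  have := dvd_add (h.trans (sub_dvd_pow_sub_pow α β (2 * m))) htd
  convert this using 1; ring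

lemma symbol_one {π : GaussianInt} (hπ : OddPrime π) : quarticSymbolPrime 1 π ^ 2 = 1 := by
  obtain ⟨m, hm, hN, -⟩ := gnorm_form hπ
  simpa using sq_symbol_eq (s := 1) hπ.1 (not_dvd_two hπ.1 hπ.2.1 hπ.2.2) hm hN
    (by simp) (by simp)

lemma symbol_prod {π : GaussianInt} (hπ : OddPrime π) {ι : Type*} (s : Finset ι)
    (f : ι → GaussianInt) :
    quarticSymbolPrime (∏ i ∈ s, f i) π ^ 2 = ∏ i ∈ s, quarticSymbolPrime (f i) π ^ 2 := by
  classical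
  induction s using Finset.induction_on with
  | empty => simpa using symbol_one hπ
  | insert a s ha ih => rw [Finset.prod_insert ha, Finset.prod_insert ha, symbol_mul hπ, ih]

lemma symbol_sq {π α : GaussianInt} (hπ : OddPrime π) (h : ¬ π ∣ α) :
    quarticSymbolPrime α π ^ 2 * quarticSymbolPrime α π ^ 2 = 1 := by
  obtain ⟨m, hm, hN, H⟩ := gnorm_form hπ
  obtain ⟨s, hs, hsd⟩ := H α
  rw [sq_symbol_eq hπ.1 (not_dvd_two hπ.1 hπ.2.1 hπ.2.2) hm hN hs hsd]
  rcases hs with rfl | rfl | rfl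
  · exact absurd (hπ.1.dvd_of_dvd_pow (by simpa using hsd)) h
  · simp
  · simp

/-! ### Quadratic reciprocity in `ℤ[i]` -/

/-- For two split primes, the two symbols are `(e/p)` and `(e/p')` with the same odd
`e = ac + bd`, and `pp' = e² + (ad - bc)²` makes `(pp'/e)` trivial. -/
lemma jacobi_eq {p p' : ℕ} (hp4 : p % 4 = 1) (hp4' : p' % 4 = 1) {e f : ℤ}
    (he : e % 2 = 1) (h : (p : ℤ) * p' = e ^ 2 + f ^ 2)
    (hc : e.gcd p = 1) (hc' : e.gcd p' = 1) : jacobiSym e p = jacobiSym e p' := by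
  have hodd : Odd e.natAbs := by rw [Nat.odd_iff]; omega
  have key : ∀ r : ℕ, r % 4 = 1 → jacobiSym e r = jacobiSym (r : ℤ) e.natAbs := by
    intro r hr
    have habs : jacobiSym e r = jacobiSym (e.natAbs : ℤ) r := by
      rcases Int.natAbs_eq e with h | h
      · rw [← h]
      · conv_lhs => rw [h]
        rw [jacobiSym.neg _ (by rw [Nat.odd_iff]; omega), ZMod.χ₄_nat_one_mod_four hr, one_mul]
    rw [habs, jacobiSym.quadratic_reciprocity_one_mod_four' hodd hr]
  rw [key p hp4, key p' hp4']
  have hmod : jacobiSym ((p : ℤ) * p') e.natAbs = jacobiSym (f ^ 2) e.natAbs := by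
    apply jacobiSym.mod_left'
    apply Int.ModEq.symm
    rw [Int.modEq_iff_dvd]
    exact ⟨e.natAbs, by rw [h]; linear_combination -Int.natAbs_mul_self' e⟩
  have hcop : IsCoprime ((p : ℤ) * p') e :=
    ((Int.isCoprime_iff_gcd_eq_one.mpr hc).symm).mul_left (Int.isCoprime_iff_gcd_eq_one.mpr hc').symm
  have hf : f.gcd e.natAbs = 1 := by
    rw [show f.gcd e.natAbs = f.gcd e by simp only [Int.gcd, Int.natAbs_natCast], ← Int.isCoprime_iff_gcd_eq_one]
    rw [h, show e ^ 2 + f ^ 2 = f ^ 2 + e * e by ring, IsCoprime.add_mul_left_left_iff] at hcop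
    exact (IsCoprime.pow_left_iff two_pos).mp hcop
  rw [jacobiSym.sq_one' hf, jacobiSym.mul_left] at hmod
  rcases jacobi_cases p e.natAbs with h1 | h1 | h1 <;>
    rcases jacobi_cases p' e.natAbs with h2 | h2 | h2 <;> rw [h1, h2] at hmod <;> simp_all

/-- The split–inert case: both symbols equal the rational symbol of `q` modulo `p = N(π)`. -/
lemma recip_split_inert {π l : GaussianInt} (hπ : OddPrime π) (hl : OddPrime l)
    {p : ℕ} (pp : p.Prime) (hp4 : p % 4 = 1) (hN : π.norm = p)
    {q : ℕ} (pq : q.Prime) (hq4 : q % 4 = 3) (h0 : l.im = 0) (hq : l.re = q ∨ l.re = -q) :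
    quarticSymbolPrime l π ^ 2 = quarticSymbolPrime π l ^ 2 := by
  rw [symbol_split hπ pp hp4 hN, symbol_inert hl pq hq4 h0 hq, hN, h0, mul_zero, add_zero,
    jacobiSym.mul_left, jacobi_re (b := π.im) pp hp4 hπ.2.1 (by rw [← hN, norm_eq]), one_mul,
    jacobiSym.quadratic_reciprocity_one_mod_four hp4 (by rw [Nat.odd_iff]; omega)]
  rcases hq with h | h <;> rw [h]
  rw [jacobiSym.neg _ (by rw [Nat.odd_iff]; omega), ZMod.χ₄_nat_one_mod_four hp4, one_mul]

theorem quadratic_reciprocity {π l : GaussianInt} (hπ : OddPrime π) (hl : OddPrime l)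
    (h1 : ¬ π ∣ l) (h2 : ¬ l ∣ π) :
    quarticSymbolPrime l π ^ 2 = quarticSymbolPrime π l ^ 2 := by
  rcases prime_cases hπ.1 hπ.2.1 hπ.2.2 with ⟨p, pp, hp4, hN⟩ | ⟨q, pq, hq4, h0, hq⟩ <;>
    rcases prime_cases hl.1 hl.2.1 hl.2.2 with ⟨p', pp', hp4', hN'⟩ | ⟨q', pq', hq4', h0', hq'⟩
  · have e1 := symbol_split hπ pp hp4 hN l
    have e2 := symbol_split hl pp' hp4' hN' π
    have s1 := symbol_sq hπ h1
    have s2 := symbol_sq hl h2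
    rw [show l.re * π.re + l.im * π.im = π.re * l.re + π.im * l.im by ring] at e2
    rw [e1] at s1
    rw [e2] at s2
    rw [e1, e2]
    have hne : ∀ {e : ℤ} {r : ℕ}, r % 4 = 1 →
        ((jacobiSym e r : ℤ) : GaussianInt) * (jacobiSym e r : ℤ) = 1 → e.gcd r = 1 := by
      intro e r hr h
      have : NeZero r := ⟨by omega⟩
      by_contra hg
      rw [jacobiSym.eq_zero_iff_not_coprime.mpr hg] at h
      simp at h
    rw [jacobi_eq (f := π.re * l.im - π.im * l.re) hp4 hp4' ?_ ?_ (hne hp4 s1) (hne hp4' s2)]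
    · rw [Int.add_emod, Int.mul_emod, Int.mul_emod π.im, hπ.2.1, hπ.2.2, hl.2.1]
      norm_num
    · rw [← hN, ← hN', norm_eq, norm_eq]; ring
  · exact recip_split_inert hπ hl pp hp4 hN pq' hq4' h0' hq'
  · exact (recip_split_inert hl hπ pp' hp4' hN' pq hq4 h0 hq).symm
  · have s1 := symbol_sq hπ h1
    have s2 := symbol_sq hl h2
    rw [symbol_inert hπ pq hq4 h0 hq] at s1 ⊢
    rw [symbol_inert hl pq' hq4' h0' hq'] at s2 ⊢
    have e1 : jacobiSym l.norm q = jacobiSym l.re q * jacobiSym l.re q := by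
      rw [← jacobiSym.mul_left, norm_eq, h0']; ring_nf
    have e2 : jacobiSym π.norm q' = jacobiSym π.re q' * jacobiSym π.re q' := by
      rw [← jacobiSym.mul_left, norm_eq, h0]; ring_nf
    rw [e1] at s1 ⊢
    rw [e2] at s2 ⊢
    rcases jacobi_cases l.re q with h | h | h <;> rcases jacobi_cases π.re q' with h' | h' | h' <;>
      simp_all

/-! ### The symbol with composite lower entry, and the additive character -/

open scoped Classical in
/-- An element chosen among those satisfying `P`, or `0` if there is none: the shape of `quarticSymbolPrime` with its
defining predicate abstracted. -/
def quarticChoice (P : GaussianInt → Prop) : GaussianInt :=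
  if h : ∃ u : GaussianInt, P u then h.choose else 0

lemma symbol_associated (α : GaussianInt) {π l : GaussianInt} (h : Associated π l) :
    quarticSymbolPrime α π = quarticSymbolPrime α l := by
  have hN : gnorm π = gnorm l := by
    obtain ⟨u, rfl⟩ := h
    unfold gnorm
    rw [Zsqrtd.norm_mul, Int.natAbs_mul, Zsqrtd.norm_eq_one_iff.mpr u.isUnit, mul_one]
  -- The two defining predicates agree, so the chosen units are the same.
  have aux : ∀ P Q : GaussianInt → Prop, P = Q →
      quarticChoice P = quarticChoice Q := fun P Q h => by rw [h]
  exact aux _ _ (funext fun u => by rw [hN, h.dvd_iff_dvd_left])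

/-- The symbol can be computed from any prime factorization of the lower entry, since it only
depends on the associate classes of the factors. -/
lemma quadSymbol_prod (α : GaussianInt) {ι : Type*} (s : Finset ι) (π : ι → GaussianInt)
    (hπ : ∀ i ∈ s, Prime (π i)) :
    quadSymbol α (∏ i ∈ s, π i) = ∏ i ∈ s, quarticSymbolPrime α (π i) ^ 2 := by
  have hne : ∏ i ∈ s, π i ≠ 0 := Finset.prod_ne_zero_iff.mpr fun i hi => (hπ i hi).ne_zero
  have hrel : Multiset.Rel Associated
      (UniqueFactorizationMonoid.factors (∏ i ∈ s, π i)) (s.val.map π) := by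
    apply prime_factors_unique
    · exact fun x hx => UniqueFactorizationMonoid.prime_of_factor x hx
    · intro x hx
      obtain ⟨i, hi, rfl⟩ := Multiset.mem_map.mp hx
      exact hπ i hi
    · exact UniqueFactorizationMonoid.factors_prod hne
  have hmap : (UniqueFactorizationMonoid.factors (∏ i ∈ s, π i)).map (quarticSymbolPrime α) =
      (s.val.map π).map (quarticSymbolPrime α) := by
    rw [← Multiset.rel_eq, Multiset.rel_map]
    exact hrel.mono fun a _ b _ h => symbol_associated α h
  unfold quadSymbol quarticSymbol
  rw [hmap, Multiset.map_map, Finset.prod_pow]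
  rfl

lemma quadSymbol_prime (α : GaussianInt) {π : GaussianInt} (hπ : Prime π) :
    quadSymbol α π = quarticSymbolPrime α π ^ 2 := by
  simpa using quadSymbol_prod α {()} (fun _ => π) (by simpa using hπ)

lemma eTilde_add (z w : ℂ) : eTilde (z + w) = eTilde z * eTilde w := by
  unfold eTilde
  rw [← Complex.exp_add, map_add]
  congr 1; ring

lemma eTilde_zero : eTilde 0 = 1 := by simp [eTilde]

lemma eTilde_sum {ι : Type*} (s : Finset ι) (f : ι → ℂ) :
    eTilde (∑ i ∈ s, f i) = ∏ i ∈ s, eTilde (f i) := by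
  classical
  induction s using Finset.induction_on with
  | empty => simpa using eTilde_zero
  | insert a s ha ih => rw [Finset.sum_insert ha, Finset.prod_insert ha, eTilde_add, ih]

lemma eTilde_int (z : GaussianInt) : eTilde (toComplex z) = 1 := by
  unfold eTilde
  rw [Complex.exp_eq_one_iff]
  refine ⟨z.im, ?_⟩
  rw [GaussianInt.toComplex_def]
  simp
  field_simp
  ring

lemma eTilde_congr {c x y : GaussianInt} (hc : c ≠ 0) (h : c ∣ x - y) :
    eTilde (toComplex x / toComplex c) = eTilde (toComplex y / toComplex c) := by
  obtain ⟨w, hw⟩ := h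
  have hc' : toComplex c ≠ 0 := by simpa using hc
  rw [sub_eq_iff_eq_add.mp hw, map_add, map_mul, add_div, mul_div_cancel_left₀ _ hc', eTilde_add,
    eTilde_int, one_mul]

lemma finite_quotient {c : GaussianInt} (hc : c ≠ 0) : Finite (GaussianInt ⧸ Ideal.span {c}) := by
  have hfin : Module.Finite ℤ GaussianInt := by
    refine Module.Finite.of_surjective
      (LinearMap.toSpanSingleton ℤ GaussianInt 1 |>.coprod
        (LinearMap.toSpanSingleton ℤ GaussianInt gi)) ?_
    intro z
    refine ⟨(z.re, z.im), ?_⟩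
    conv_rhs => rw [eq_add_gi z]
    simp
  have : Module.Free ℤ GaussianInt := inferInstance
  exact Ideal.finiteQuotientOfFreeOfNeBot _ (by simpa using hc)

lemma out_mk_dvd {c : GaussianInt} (x : GaussianInt) :
    c ∣ Quotient.out (Ideal.Quotient.mk (Ideal.span {c}) x) - x := by
  rw [← Ideal.mem_span_singleton, ← Ideal.Quotient.mk_eq_mk_iff_sub_mem]
  exact Quotient.out_eq _

/-! ### Splitting the Gauss sum by the Chinese remainder theorem -/

section CRT

variable {ι : Type*} [Fintype ι] [DecidableEq ι]

/-- The cofactor `∏_{j ≠ i} π_j`. -/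
def cofactor (π : ι → GaussianInt) (i : ι) : GaussianInt := ∏ j ∈ {i}ᶜ, π j

lemma mul_cofactor (π : ι → GaussianInt) (i : ι) : π i * cofactor π i = ∏ j, π j := by
  unfold cofactor
  exact Fintype.prod_eq_mul_prod_compl i π |>.symm

lemma dvd_cofactor (π : ι → GaussianInt) {i j : ι} (h : i ≠ j) : π i ∣ cofactor π j :=
  Finset.dvd_prod_of_mem π (by simpa using h)

/-- The Chinese remainder parametrization `(x_i) ↦ ∑ x_i ∏_{j ≠ i} π_j` of the residues
modulo `∏ π_i`, written with the chosen representatives of the residue classes. -/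
def crtMap (π : ι → GaussianInt) (x : ∀ i, GaussianInt ⧸ Ideal.span {π i}) :
    GaussianInt ⧸ Ideal.span {∏ i, π i} :=
  Ideal.Quotient.mk _ (∑ i, Quotient.out (x i) * cofactor π i)

lemma sum_cofactor_dvd (π : ι → GaussianInt) (f : ι → GaussianInt) (i : ι) :
    π i ∣ (∑ j, f j * cofactor π j) - f i * cofactor π i := by
  rw [← Finset.add_sum_erase _ _ (Finset.mem_univ i), add_sub_cancel_left]
  exact Finset.dvd_sum fun j hj => (dvd_cofactor π (Finset.ne_of_mem_erase hj).symm).mul_left _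

lemma isCoprime_cofactor {π : ι → GaussianInt} (hco : Pairwise (Function.onFun IsCoprime π))
    (i : ι) : IsCoprime (π i) (cofactor π i) :=
  IsCoprime.prod_right fun j hj => hco (by simpa [eq_comm] using hj)

lemma crtMap_bijective {π : ι → GaussianInt} (hco : Pairwise (Function.onFun IsCoprime π)) :
    Function.Bijective (crtMap π) := by
  constructor
  · intro x y hxy
    unfold crtMap at hxy
    rw [Ideal.Quotient.mk_eq_mk_iff_sub_mem, Ideal.mem_span_singleton] at hxy
    funext i
    have h1 := (Finset.dvd_prod_of_mem π (Finset.mem_univ i)).trans hxy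
    have h2 := sum_cofactor_dvd π (fun j => Quotient.out (x j)) i
    have h3 := sum_cofactor_dvd π (fun j => Quotient.out (y j)) i
    have h4 : π i ∣ (Quotient.out (x i) - Quotient.out (y i)) * cofactor π i := by
      convert dvd_add (dvd_sub h1 h2) h3 using 1; ring
    have h5 := (isCoprime_cofactor hco i).dvd_of_dvd_mul_right h4
    rw [← Ideal.mem_span_singleton, ← Ideal.Quotient.mk_eq_mk_iff_sub_mem] at h5
    have e : ∀ z : GaussianInt ⧸ Ideal.span {π i},
        Ideal.Quotient.mk (Ideal.span {π i}) (Quotient.out z) = z := fun z => Quotient.out_eq z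
    rwa [e, e] at h5
  · intro z
    obtain ⟨z, rfl⟩ := Ideal.Quotient.mk_surjective z
    choose a b hab using isCoprime_cofactor hco
    refine ⟨fun i => Ideal.Quotient.mk _ (z * b i), ?_⟩
    unfold crtMap
    rw [Ideal.Quotient.mk_eq_mk_iff_sub_mem, Ideal.mem_span_singleton]
    refine Fintype.prod_dvd_of_coprime hco fun i => ?_
    have h1 := sum_cofactor_dvd π
      (fun j => Quotient.out (Ideal.Quotient.mk (Ideal.span {π j}) (z * b j))) i
    have h2 := (out_mk_dvd (c := π i) (z * b i)).mul_right (cofactor π i)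
    have h3 : π i ∣ z * b i * cofactor π i - z :=
      ⟨-(z * a i), by linear_combination z * hab i⟩
    convert dvd_add (dvd_add h1 h2) h3 using 1; ring

end CRT

/-- The correction factor `∏_{i ≠ j} (π_j/π_i)` is trivial: by reciprocity its factors are equal in
pairs, and each of them is `±1`. -/
lemma prod_cofactor_symbol {k : ℕ} {π : Fin k → GaussianInt} (hπ : ∀ i, OddPrime (π i))
    (hnd : ∀ i j, i ≠ j → ¬ π i ∣ π j) :
    ∏ i, quarticSymbolPrime (cofactor π i) (π i) ^ 2 = 1 := by
  unfold cofactor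
  simp_rw [symbol_prod (hπ _)]
  rw [← Finset.prod_prod_Ioi_mul_eq_prod_prod_off_diag
    (fun j i => quarticSymbolPrime (π j) (π i) ^ 2)]
  refine Finset.prod_eq_one fun i _ => Finset.prod_eq_one fun j hj => ?_
  have hij : i ≠ j := (Finset.mem_Ioi.mp hj).ne
  rw [quadratic_reciprocity (hπ j) (hπ i) (hnd j i hij.symm) (hnd i j hij)]
  exact symbol_sq (hπ i) (hnd i j hij)

/-- Multiplicativity of the quadratic Gauss sum: if `c ≠ 1` is square-free with
`c ≡ 1 (mod 16)` and `c = π₁ ⋯ π_k` with distinct primary primes `π_i`, then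
`g(c) = ∏ᵢ g(πᵢ)`. -/
theorem gauss_sum_multiplicative (c : GaussianInt) (hc : Squarefree c)
    (h16 : ModOne16 c) (hc1 : c ≠ 1)
    (k : ℕ) (π : Fin k → GaussianInt)
    (hprime : ∀ i, Prime (π i)) (hprimary : ∀ i, IsPrimary (π i))
    (hdist : Function.Injective π) (hprod : c = ∏ i, π i) :
    quadGaussSum c = ∏ i, quadGaussSum (π i) := by
  subst hprod
  have hπ : ∀ i, OddPrime (π i) := fun i => ⟨hprime i, (hprimary i).parity⟩
  have hnd : ∀ i j, i ≠ j → ¬ π i ∣ π j := by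
    intro i j hij h
    refine (hprime i).not_isUnit (hc (π i) ?_)
    rw [← mul_cofactor π i]
    exact mul_dvd_mul_left _ (h.trans (dvd_cofactor π hij.symm))
  have hco : Pairwise (Function.onFun IsCoprime π) := fun i j hij =>
    ((hprime i).irreducible.coprime_iff_not_dvd).mpr (hnd i j hij)
  have hc0 : ∏ i, π i ≠ 0 := Finset.prod_ne_zero_iff.mpr fun i _ => (hprime i).ne_zero
  have hfin : ∀ i, Finite (GaussianInt ⧸ Ideal.span {π i}) :=
    fun i => finite_quotient (hprime i).ne_zero
  have : ∀ i, Fintype (GaussianInt ⧸ Ideal.span {π i}) := fun i => Fintype.ofFinite _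
  unfold quadGaussSum
  simp_rw [tsum_fintype]
  rw [← (Equiv.ofBijective _ (crtMap_bijective hco)).tsum_eq, tsum_fintype, Fintype.prod_sum]
  refine Finset.sum_congr rfl fun x _ => ?_
  rw [Equiv.ofBijective_apply, Finset.prod_mul_distrib]
  have hX := out_mk_dvd (c := ∏ i, π i) (∑ i, Quotient.out (x i) * cofactor π i)
  change _ ∣ Quotient.out (crtMap π x) - _ at hX
  congr 1
  · rw [← map_prod, quadSymbol_prod _ _ _ fun i _ => hprime i]
    congr 1
    have key : ∀ i, quarticSymbolPrime (Quotient.out (crtMap π x)) (π i) ^ 2 =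
        quadSymbol (Quotient.out (x i)) (π i) *
          quarticSymbolPrime (cofactor π i) (π i) ^ 2 := by
      intro i
      rw [quadSymbol_prime _ (hprime i), ← symbol_mul (hπ i)]
      apply symbol_congr (hπ i)
      have h1 := (Finset.dvd_prod_of_mem π (Finset.mem_univ i)).trans hX
      convert dvd_add h1 (sum_cofactor_dvd π (fun j => Quotient.out (x j)) i) using 1
      ring
    simp_rw [key]
    rw [Finset.prod_mul_distrib, prod_cofactor_symbol hπ hnd, mul_one]
  · rw [eTilde_congr hc0 hX, map_sum, Finset.sum_div, eTilde_sum]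
    refine Finset.prod_congr rfl fun i _ => ?_
    have h1 : toComplex (π i) ≠ 0 := by simpa using (hprime i).ne_zero
    have h2 : toComplex (cofactor π i) ≠ 0 := by
      have := right_ne_zero_of_mul ((mul_cofactor π i).trans_ne hc0)
      simpa using this
    rw [← mul_cofactor π i, map_mul, map_mul, mul_div_mul_right _ _ h2]

end
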